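/- (Weak Young inequality) Let d ≥ 1 and let 1 < p, q, r < ∞ satisfy 1 + 1/q = 1/r + 1/p. There exists a constant C = C(p,q,r,d) > 0 such that: for all measurable f, g : ℝ^d → ℝ with ‖f‖_{L^{r,∞}(ℝ^d)} < ∞ and ‖g‖_{L^p(ℝ^d)} < ∞, the convolution integral (f⋆g)(x) = ∫_{ℝ^d} f(x−y) g(y) dy converges absolutely for almost every x, and ‖f⋆g‖_{L^q(ℝ^d)} ≤ C ‖f‖_{L^{r,∞}(ℝ^d)} ‖g‖_{L^p(ℝ^d)}. -/

import Mathlib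

open MeasureTheory Real ENNReal

noncomputable section

/-- The weak Lebesgue (Lorentz) quasinorm
‖f‖_{L^{r,∞}} = sup_{λ>0} λ · μ{x : |f x| > λ}^{1/r} on ℝ^d. -/
def weakLnorm {d : ℕ} (f : (Fin d → ℝ) → ℝ) (r : ℝ) : ℝ≥0∞ :=
  ⨆ (l : ℝ) (_ : 0 < l),
    ENNReal.ofReal l * (volume {x : Fin d → ℝ | l < |f x|}) ^ (1 / r)

/-- The L^s norm ‖g‖_{L^s} = (∫ |g|^s)^{1/s} on ℝ^d, valued in [0,∞]. -/
def Lnorm {d : ℕ} (g : (Fin d → ℝ) → ℝ) (s : ℝ) : ℝ≥0∞ :=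
  (∫⁻ x : Fin d → ℝ, ENNReal.ofReal (|g x| ^ s)) ^ (1 / s)

/-!
After normalising both norms to `1`, split `f (x - y) * g y`, for every level `l > 0`, at the height
`l ^ (q / r)` of `f` and the height `l ^ (q / p)` of `g`. Where `f` is small, Hölder's inequality
bounds the integral by a multiple of `l`; where `f` is large and `g` is small, so does the tail
estimate for weak `L^r`. Hence `(|f| ⋆ |g|)(x) ≤ K l + R(l, x)`, where `R(l, x)` is the contribution
of the region where both functions are large. Integrating this bound against `l ^ (q - 2)` over
small `l` bounds the `q`-th power of `(|f| ⋆ |g|)(x)` by a multiple of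
`∫ l ^ (q - 2) * R(l, x) dl`, and after integration in `x` Tonelli's theorem separates `f` from `g`.
-/

section PowerIntegrals

lemma lintegral_Ioo_zero_rpow {a b : ℝ} (ha : -1 < a) (hb : 0 ≤ b) :
    ∫⁻ t in Set.Ioo 0 b, ENNReal.ofReal (t ^ a) = ENNReal.ofReal (b ^ (a + 1) / (a + 1)) := by
  have hint : IntegrableOn (fun t : ℝ ↦ t ^ a) (Set.Ioc 0 b) :=
    (intervalIntegral.intervalIntegrable_rpow' ha).1
  have hnonneg : ∀ᵐ t ∂volume.restrict (Set.Ioc 0 b), 0 ≤ t ^ a :=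
    ae_restrict_of_forall_mem measurableSet_Ioc fun t ht ↦ rpow_nonneg ht.1.le a
  rw [setLIntegral_congr Ioo_ae_eq_Ioc, ← ofReal_integral_eq_lintegral_ofReal hint hnonneg,
    ← intervalIntegral.integral_of_le hb, integral_rpow (.inl ha), zero_rpow (by linarith),
    sub_zero]

lemma lintegral_Ioi_rpow_neg {r c : ℝ} (hr : 1 < r) (hc : 0 < c) :
    ∫⁻ t in Set.Ioi c, ENNReal.ofReal (t ^ (-r)) = ENNReal.ofReal (c ^ (1 - r) / (r - 1)) := by
  have hnonneg : ∀ᵐ t ∂volume.restrict (Set.Ioi c), 0 ≤ t ^ (-r) :=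
    ae_restrict_of_forall_mem measurableSet_Ioi fun t ht ↦ rpow_nonneg (hc.trans ht).le (-r)
  have hr' : -r < -1 := neg_lt_neg hr
  rw [← ofReal_integral_eq_lintegral_ofReal (integrableOn_Ioi_rpow_of_lt hr' hc) hnonneg,
    integral_Ioi_rpow_of_lt hr' hc, neg_div, ← div_neg, neg_add, neg_neg, ← sub_eq_add_neg,
    neg_add_eq_sub]

end PowerIntegrals

section WeakLp

variable {α β E : Type*} [MeasurableSpace α] [MeasurableSpace β]

/-- The weak `L^r` quasinorm `sup_{t > 0} t μ{t < ‖f‖}^{1/r}` over an arbitrary measure space, with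
values in `[0, ∞]`; it extends `weakLnorm` in the way `eLpNorm'` extends `Lnorm`. -/
def eWeakLpNorm [Norm E] (f : α → E) (r : ℝ) (μ : Measure α) : ℝ≥0∞ :=
  ⨆ (t : ℝ) (_ : 0 < t), ENNReal.ofReal t * μ {x | t < ‖f x‖} ^ (1 / r)

/-- The truncation `‖f‖ 1_{τ < ‖f‖}` of the norm of `f` to the region where it exceeds `τ`. -/
def upperTrunc [SeminormedAddCommGroup E] (f : α → E) (τ : ℝ) : α → ℝ≥0∞ :=
  {x | τ < ‖f x‖}.indicator fun x ↦ ‖f x‖ₑ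

lemma eWeakLpNorm_comp_measurePreserving [SeminormedAddCommGroup E] {f : β → E} {r : ℝ}
    {μ : Measure α} {ν : Measure β} {φ : α → β} (hf : AEStronglyMeasurable f ν)
    (hφ : MeasurePreserving φ μ ν) :
    eWeakLpNorm (fun x ↦ f (φ x)) r μ = eWeakLpNorm f r ν := by
  have hlevel (t : ℝ) : μ {x | t < ‖f (φ x)‖} = ν {y | t < ‖f y‖} :=
    hφ.measure_preimage (nullMeasurableSet_lt aemeasurable_const hf.norm.aemeasurable)
  simp only [eWeakLpNorm, hlevel]

lemma eWeakLpNorm_congr_ae [Norm E] {f g : α → E} {r : ℝ} {μ : Measure α} (h : f =ᵐ[μ] g) :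
    eWeakLpNorm f r μ = eWeakLpNorm g r μ := by
  have hlevel (t : ℝ) : μ {x | t < ‖f x‖} = μ {x | t < ‖g x‖} :=
    measure_congr (h.fun_comp (t < ‖·‖))
  simp only [eWeakLpNorm, hlevel]

variable [SeminormedAddCommGroup E] {f : α → E} {μ : Measure α} {r s τ : ℝ}

lemma measure_lt_norm_le_eWeakLpNorm (hr : 0 < r) {t : ℝ} (ht : 0 < t) :
    μ {x | t < ‖f x‖} ≤ ENNReal.ofReal (t ^ (-r)) * eWeakLpNorm f r μ ^ r := by
  have hsup : ENNReal.ofReal t * μ {x | t < ‖f x‖} ^ (1 / r) ≤ eWeakLpNorm f r μ :=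
    le_iSup₂ (f := fun (t : ℝ) (_ : 0 < t) ↦ ENNReal.ofReal t * μ {x | t < ‖f x‖} ^ (1 / r)) t ht
  have hpow := ENNReal.rpow_le_rpow hsup hr.le
  rw [ENNReal.mul_rpow_of_nonneg _ _ hr.le, ← ENNReal.rpow_mul, one_div_mul_cancel hr.ne',
    ENNReal.rpow_one, ENNReal.ofReal_rpow_of_pos ht] at hpow
  calc μ {x | t < ‖f x‖}
      = ENNReal.ofReal (t ^ (-r)) * (ENNReal.ofReal (t ^ r) * μ {x | t < ‖f x‖}) := by
        rw [← mul_assoc, ← ENNReal.ofReal_mul (by positivity), ← rpow_add ht, neg_add_cancel,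
          Real.rpow_zero, ENNReal.ofReal_one, one_mul]
    _ ≤ ENNReal.ofReal (t ^ (-r)) * eWeakLpNorm f r μ ^ r := by gcongr

lemma lintegral_upperTrunc_eq (hf : AEStronglyMeasurable f μ) (hτ : 0 ≤ τ) :
    ∫⁻ x, upperTrunc f τ x ∂μ = ENNReal.ofReal τ * μ {x | τ < ‖f x‖} +
      ∫⁻ t in Set.Ioi τ, μ {x | t < ‖f x‖} := by
  set S := {x | τ < ‖f x‖}
  have hmeas (t : ℝ) : NullMeasurableSet {x | t < ‖f x‖} μ :=
    nullMeasurableSet_lt aemeasurable_const hf.norm.aemeasurable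
  have hlevel (t : ℝ) : μ.restrict S {x | t < ‖f x‖} = μ {x | max t τ < ‖f x‖} := by
    rw [Measure.restrict_apply₀' (hmeas τ)]
    simp only [max_lt_iff, Set.ofPred_and]
  have hlow : ∫⁻ t in Set.Ioc 0 τ, μ {x | max t τ < ‖f x‖} = ENNReal.ofReal τ * μ S := by
    rw [setLIntegral_congr_fun (g := fun _ ↦ μ S) measurableSet_Ioc
      fun t ht ↦ by simp only [max_eq_right ht.2, S], setLIntegral_const, Real.volume_Ioc,
      sub_zero, mul_comm]
  have hhigh : ∫⁻ t in Set.Ioi τ, μ {x | max t τ < ‖f x‖} =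
      ∫⁻ t in Set.Ioi τ, μ {x | t < ‖f x‖} :=
    setLIntegral_congr_fun measurableSet_Ioi fun t (ht : τ < t) ↦ by
      simp only [max_eq_left ht.le]
  calc ∫⁻ x, upperTrunc f τ x ∂μ
      = ∫⁻ x in S, ENNReal.ofReal ‖f x‖ ∂μ := by
        simp only [upperTrunc, lintegral_indicator₀ (hmeas τ), ofReal_norm, S]
    _ = ∫⁻ t in Set.Ioi 0, μ {x | max t τ < ‖f x‖} := by
        simp only [← hlevel, lintegral_eq_lintegral_meas_lt (μ.restrict S)
          (.of_forall fun x ↦ norm_nonneg (f x)) hf.norm.aemeasurable.restrict]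
    _ = _ := by
        rw [← Set.Ioc_union_Ioi_eq_Ioi hτ, lintegral_union measurableSet_Ioi
          (Set.Ioc_disjoint_Ioi le_rfl), hlow, hhigh]

lemma lintegral_upperTrunc_le (hr : 1 < r) (hf : AEStronglyMeasurable f μ) (hτ : 0 < τ) :
    ∫⁻ x, upperTrunc f τ x ∂μ ≤
      ENNReal.ofReal (r / (r - 1) * τ ^ (1 - r)) * eWeakLpNorm f r μ ^ r := by
  have hr₀ : 0 < r := by linarith
  have hr₁ : 0 < r - 1 := by linarith
  have hconst : τ * τ ^ (-r) + τ ^ (1 - r) / (r - 1) = r / (r - 1) * τ ^ (1 - r) := by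
    rw [← rpow_one_add' hτ.le (by linarith), ← sub_eq_add_neg]
    field_simp
    ring
  calc ∫⁻ x, upperTrunc f τ x ∂μ
      = ENNReal.ofReal τ * μ {x | τ < ‖f x‖} + ∫⁻ t in Set.Ioi τ, μ {x | t < ‖f x‖} :=
        lintegral_upperTrunc_eq hf hτ.le
    _ ≤ ENNReal.ofReal τ * (ENNReal.ofReal (τ ^ (-r)) * eWeakLpNorm f r μ ^ r) +
          ∫⁻ t in Set.Ioi τ, ENNReal.ofReal (t ^ (-r)) * eWeakLpNorm f r μ ^ r := by
        gcongr ENNReal.ofReal τ * ?_ + ?_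
        · exact measure_lt_norm_le_eWeakLpNorm hr₀ hτ
        · exact setLIntegral_mono' measurableSet_Ioi fun t ht ↦
            measure_lt_norm_le_eWeakLpNorm hr₀ (hτ.trans ht)
    _ = ENNReal.ofReal (r / (r - 1) * τ ^ (1 - r)) * eWeakLpNorm f r μ ^ r := by
        rw [lintegral_mul_const _ (by fun_prop), lintegral_Ioi_rpow_neg hr hτ, ← mul_assoc,
          ← add_mul, ← ENNReal.ofReal_mul hτ.le,
          ← ENNReal.ofReal_add (by positivity) (by positivity), hconst]

lemma setLIntegral_norm_le_rpow_le (hr : 0 < r) (hrs : r < s) (hf : AEStronglyMeasurable f μ)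
    (hτ : 0 ≤ τ) :
    ∫⁻ x in {x | ‖f x‖ ≤ τ}, ‖f x‖ₑ ^ s ∂μ ≤
      ENNReal.ofReal (s / (s - r) * τ ^ (s - r)) * eWeakLpNorm f r μ ^ r := by
  have hs : 0 < s := hr.trans hrs
  set S := {x | ‖f x‖ ≤ τ}
  have hlevel : ∀ t ∈ Set.Ioi (0 : ℝ),
      μ.restrict S {x | t < ‖f x‖} * ENNReal.ofReal (t ^ (s - 1)) ≤
        (Set.Iio τ).indicator
          (fun t ↦ ENNReal.ofReal (t ^ (s - r - 1)) * eWeakLpNorm f r μ ^ r) t := by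
    intro t (ht : 0 < t)
    rcases lt_or_ge t τ with htτ | htτ
    · rw [Set.indicator_of_mem (show t ∈ Set.Iio τ from htτ)]
      calc μ.restrict S {x | t < ‖f x‖} * ENNReal.ofReal (t ^ (s - 1))
          ≤ ENNReal.ofReal (t ^ (-r)) * eWeakLpNorm f r μ ^ r * ENNReal.ofReal (t ^ (s - 1)) := by
            gcongr
            exact (Measure.restrict_apply_le _ _).trans (measure_lt_norm_le_eWeakLpNorm hr ht)
        _ = ENNReal.ofReal (t ^ (s - r - 1)) * eWeakLpNorm f r μ ^ r := by
            rw [mul_right_comm, ← ENNReal.ofReal_mul (by positivity), ← rpow_add ht]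
            ring_nf
    · have hnull : NullMeasurableSet {x | t < ‖f x‖} (μ.restrict S) :=
        nullMeasurableSet_lt aemeasurable_const hf.norm.aemeasurable.restrict
      have hempty : {x | t < ‖f x‖} ∩ S = ∅ :=
        Set.eq_empty_of_forall_notMem fun x hx ↦ (hx.2.trans htτ).not_gt hx.1
      simp [Measure.restrict_apply₀ hnull, hempty]
  calc ∫⁻ x in S, ‖f x‖ₑ ^ s ∂μ
      = ∫⁻ x in S, ENNReal.ofReal (‖f x‖ ^ s) ∂μ := by
        simp only [← ENNReal.ofReal_rpow_of_nonneg (norm_nonneg _) hs.le, ofReal_norm]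
    _ = ENNReal.ofReal s *
          ∫⁻ t in Set.Ioi 0, μ.restrict S {x | t < ‖f x‖} * ENNReal.ofReal (t ^ (s - 1)) :=
        lintegral_rpow_eq_lintegral_meas_lt_mul _ (.of_forall fun x ↦ norm_nonneg (f x))
          hf.norm.aemeasurable.restrict hs
    _ ≤ ENNReal.ofReal s *
          ∫⁻ t in Set.Ioo 0 τ, ENNReal.ofReal (t ^ (s - r - 1)) * eWeakLpNorm f r μ ^ r := by
        gcongr ENNReal.ofReal s * ?_
        rw [← Set.Iio_inter_Ioi, ← Measure.restrict_restrict measurableSet_Iio,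
          ← lintegral_indicator measurableSet_Iio]
        exact setLIntegral_mono' measurableSet_Ioi hlevel
    _ = ENNReal.ofReal (s / (s - r) * τ ^ (s - r)) * eWeakLpNorm f r μ ^ r := by
        rw [lintegral_mul_const _ (by fun_prop), lintegral_Ioo_zero_rpow (by linarith) hτ,
          sub_add_cancel, ← mul_assoc, ← ENNReal.ofReal_mul hs.le, mul_div_left_comm,
          div_mul_eq_mul_div, mul_comm s, mul_div_assoc]

end WeakLp

section UpperTrunc

variable {α E : Type*} [SeminormedAddCommGroup E] {f : α → E}

lemma lintegral_rpow_mul_upperTrunc_rpow {a b : ℝ} (ha : 0 < a) (hb : 0 < b) (x : α) :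
    ∫⁻ l in Set.Ioi (0 : ℝ), ENNReal.ofReal (l ^ (a - 1)) * upperTrunc f (l ^ b) x =
      ENNReal.ofReal a⁻¹ * ‖f x‖ₑ ^ (a / b + 1) := by
  have htrunc : ∀ l ∈ Set.Ioi (0 : ℝ), ENNReal.ofReal (l ^ (a - 1)) * upperTrunc f (l ^ b) x =
      (Set.Iio (‖f x‖ ^ b⁻¹)).indicator (fun l ↦ ENNReal.ofReal (l ^ (a - 1)) * ‖f x‖ₑ) l := by
    intro l (hl : 0 < l)
    have hiff : l ^ b < ‖f x‖ ↔ l < ‖f x‖ ^ b⁻¹ :=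
      (lt_rpow_inv_iff_of_pos hl.le (norm_nonneg _) hb).symm
    by_cases h : l ^ b < ‖f x‖
    · simp [upperTrunc, h, hiff.1 h]
    · simp [upperTrunc, h, mt hiff.2 h]
  rw [setLIntegral_congr_fun measurableSet_Ioi htrunc, lintegral_indicator measurableSet_Iio,
    Measure.restrict_restrict measurableSet_Iio, Set.Iio_inter_Ioi,
    lintegral_mul_const _ (by fun_prop), lintegral_Ioo_zero_rpow (by linarith) (by positivity),
    sub_add_cancel, ← rpow_mul (norm_nonneg _), div_eq_inv_mul,
    ENNReal.ofReal_mul (by positivity),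
    ← ENNReal.ofReal_rpow_of_nonneg (norm_nonneg _) (by positivity), ofReal_norm,
    ENNReal.rpow_add_of_nonneg _ _ (by positivity) zero_le_one, ENNReal.rpow_one, mul_assoc,
    div_eq_inv_mul]

variable [MeasurableSpace α]

lemma measurable_upperTrunc_comp {β : Type*} [MeasurableSpace β] (hf : StronglyMeasurable f)
    {φ : β → α} {τ : β → ℝ} (hφ : Measurable φ) (hτ : Measurable τ) :
    Measurable fun z ↦ upperTrunc f (τ z) (φ z) :=
  (hf.enorm.comp hφ).indicator (measurableSet_lt hτ (hf.norm.measurable.comp hφ))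

lemma aemeasurable_upperTrunc {μ : Measure α} (hf : AEStronglyMeasurable f μ) (τ : ℝ) :
    AEMeasurable (upperTrunc f τ) μ :=
  hf.enorm.indicator₀ (nullMeasurableSet_lt aemeasurable_const hf.norm.aemeasurable)

lemma lintegral_rpow_mul_lintegral_upperTrunc_rpow {μ : Measure α} [SFinite μ] {a b : ℝ}
    (ha : 0 < a) (hb : 0 < b) (hf : StronglyMeasurable f) :
    ∫⁻ l in Set.Ioi (0 : ℝ), ENNReal.ofReal (l ^ (a - 1)) * ∫⁻ x, upperTrunc f (l ^ b) x ∂μ =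
      ENNReal.ofReal a⁻¹ * ∫⁻ x, ‖f x‖ₑ ^ (a / b + 1) ∂μ := by
  have hmeas : Measurable fun z : ℝ × α ↦
      ENNReal.ofReal (z.1 ^ (a - 1)) * upperTrunc f (z.1 ^ b) z.2 := by
    have := measurable_upperTrunc_comp (β := ℝ × α) hf measurable_snd
      (measurable_fst.pow_const b)
    fun_prop
  simp only [← lintegral_const_mul' _ _ ENNReal.ofReal_ne_top]
  rw [lintegral_lintegral_swap hmeas.aemeasurable]
  simp only [lintegral_rpow_mul_upperTrunc_rpow ha hb]

end UpperTrunc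

section LevelBound

variable {α E F : Type*} [SeminormedAddCommGroup E] [SeminormedAddCommGroup F]

lemma enorm_mul_enorm_le_add_upperTrunc (u : α → E) (v : α → F) (τ γ : ℝ) (x : α) :
    ‖u x‖ₑ * ‖v x‖ₑ ≤ {x | ‖u x‖ ≤ τ}.indicator (fun x ↦ ‖u x‖ₑ * ‖v x‖ₑ) x +
      ENNReal.ofReal γ * upperTrunc u τ x + upperTrunc u τ x * upperTrunc v γ x := by
  rcases le_or_gt ‖u x‖ τ with hux | hux
  · simp [hux, upperTrunc, hux.not_gt]
  rcases le_or_gt ‖v x‖ γ with hvx | hvx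
  · have hvx' : ‖v x‖ₑ ≤ ENNReal.ofReal γ := by
      rw [← ofReal_norm]
      gcongr
    have hprod : ‖u x‖ₑ * ‖v x‖ₑ ≤ ENNReal.ofReal γ * ‖u x‖ₑ := by
      rw [mul_comm]
      gcongr
    simpa [hux.not_ge, upperTrunc, hux, hvx.not_gt] using hprod
  · simp [upperTrunc, hux, hvx]

variable [MeasurableSpace α] {μ : Measure α} {u : α → E} {v : α → F} {p q r : ℝ}

lemma setLIntegral_enorm_mul_enorm_le {s τ : ℝ} (hsp : s.HolderConjugate p) (hr : 0 < r)
    (hrs : r < s) (hu : AEStronglyMeasurable u μ) (hv : AEStronglyMeasurable v μ) (hτ : 0 ≤ τ) :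
    ∫⁻ x in {x | ‖u x‖ ≤ τ}, ‖u x‖ₑ * ‖v x‖ₑ ∂μ ≤
      (ENNReal.ofReal (s / (s - r) * τ ^ (s - r)) * eWeakLpNorm u r μ ^ r) ^ (1 / s) *
        eLpNorm' v p μ := by
  refine (ENNReal.lintegral_mul_le_Lp_mul_Lq _ hsp hu.enorm.restrict hv.enorm.restrict).trans ?_
  gcongr ?_ ^ (1 / s) * ?_
  · exact hsp.one_div_nonneg
  · exact setLIntegral_norm_le_rpow_le hr hrs hu hτ
  · exact eLpNorm'_mono_measure v Measure.restrict_le_self hsp.symm.nonneg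

lemma lintegral_enorm_mul_enorm_le {s τ γ : ℝ} (hsp : s.HolderConjugate p) (hr : 1 < r)
    (hrs : r < s) (hu : AEStronglyMeasurable u μ) (hv : AEStronglyMeasurable v μ) (hτ : 0 < τ) :
    ∫⁻ x, ‖u x‖ₑ * ‖v x‖ₑ ∂μ ≤
      (ENNReal.ofReal (s / (s - r) * τ ^ (s - r)) * eWeakLpNorm u r μ ^ r) ^ (1 / s) *
          eLpNorm' v p μ +
        ENNReal.ofReal γ *
          (ENNReal.ofReal (r / (r - 1) * τ ^ (1 - r)) * eWeakLpNorm u r μ ^ r) +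
        ∫⁻ x, upperTrunc u τ x * upperTrunc v γ x ∂μ := by
  set S := {x | ‖u x‖ ≤ τ}
  have hS : NullMeasurableSet S μ := nullMeasurableSet_le hu.norm.aemeasurable aemeasurable_const
  have hlow : AEMeasurable (S.indicator fun x ↦ ‖u x‖ₑ * ‖v x‖ₑ) μ :=
    (hu.enorm.mul hv.enorm).indicator₀ hS
  have hlarge : AEMeasurable (fun x ↦ ENNReal.ofReal γ * upperTrunc u τ x) μ :=
    (aemeasurable_upperTrunc hu τ).const_mul _
  calc ∫⁻ x, ‖u x‖ₑ * ‖v x‖ₑ ∂μ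
      ≤ ∫⁻ x, (S.indicator (fun x ↦ ‖u x‖ₑ * ‖v x‖ₑ) x + ENNReal.ofReal γ * upperTrunc u τ x +
          upperTrunc u τ x * upperTrunc v γ x) ∂μ :=
        lintegral_mono (enorm_mul_enorm_le_add_upperTrunc u v τ γ)
    _ = ∫⁻ x in S, ‖u x‖ₑ * ‖v x‖ₑ ∂μ + ENNReal.ofReal γ * ∫⁻ x, upperTrunc u τ x ∂μ +
          ∫⁻ x, upperTrunc u τ x * upperTrunc v γ x ∂μ := by
        rw [lintegral_add_left' (by fun_prop), lintegral_add_left' hlow,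
          lintegral_indicator₀ hS, lintegral_const_mul' _ _ ENNReal.ofReal_ne_top]
    _ ≤ _ := by
        gcongr
        · exact setLIntegral_enorm_mul_enorm_le hsp (by linarith) hrs hu hv hτ.le
        · exact lintegral_upperTrunc_le hr hu hτ

/-- The constant of the part of a pairing `∫ ‖u‖ ‖v‖` that is linear in the level `l`: the first
term comes from Hölder's inequality for small `u`, the second from the tail of `u`. -/
def levelConst (p q r : ℝ) : ℝ :=
  (q / r) ^ (1 - 1 / p) + r / (r - 1)

lemma levelConst_pos (hq : 0 < q) (hr : 1 < r) : 0 < levelConst p q r := by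
  have : 0 < r - 1 := by linarith
  unfold levelConst
  positivity

lemma conjExponent_sub_eq (hp : 1 < p) (hq : 0 < q) (hr : 0 < r)
    (hpqr : 1 + 1 / q = 1 / r + 1 / p) :
    p.conjExponent - r = r * p.conjExponent / q := by
  have hconj := (Real.HolderConjugate.conjExponent hp).symm
  have hs := hconj.pos
  have hinv : 1 / q = 1 / r - 1 / p.conjExponent := by
    simp only [one_div] at hpqr ⊢
    linarith [hconj.inv_add_inv_eq_one]
  field_simp at hinv ⊢
  linarith

/- The heights `l ^ (q / r)` and `l ^ (q / p)` are the ones for which both the Hölder part and the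
tail part are linear in `l`. -/
lemma lintegral_enorm_mul_enorm_le_of_le_one (hp : 1 < p) (hq : 0 < q) (hr : 1 < r)
    (hpqr : 1 + 1 / q = 1 / r + 1 / p) (hu : AEStronglyMeasurable u μ)
    (hv : AEStronglyMeasurable v μ) (hu_le : eWeakLpNorm u r μ ≤ 1) (hv_le : eLpNorm' v p μ ≤ 1)
    {l : ℝ} (hl : 0 < l) :
    ∫⁻ x, ‖u x‖ₑ * ‖v x‖ₑ ∂μ ≤ ENNReal.ofReal (levelConst p q r * l) +
      ∫⁻ x, upperTrunc u (l ^ (q / r)) x * upperTrunc v (l ^ (q / p)) x ∂μ := by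
  have hr₀ : 0 < r := by linarith
  have : 0 < p := by linarith
  have : 0 < r - 1 := by linarith
  have hgap := conjExponent_sub_eq hp hq hr₀ hpqr
  set s := p.conjExponent
  have hsp : s.HolderConjugate p := (HolderConjugate.conjExponent hp).symm
  have hs := hsp.pos
  have hsr : 0 < s - r := hgap ▸ by positivity
  have hs_inv : 1 / s = 1 - 1 / p := by
    simp only [one_div]
    linarith [hsp.inv_add_inv_eq_one]
  have hsmall :
      (s / (s - r) * (l ^ (q / r)) ^ (s - r)) ^ (1 / s) = (q / r) ^ (1 - 1 / p) * l := by
    rw [hgap, mul_rpow (by positivity) (by positivity), ← rpow_mul hl.le, ← rpow_mul hl.le,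
      show s / (r * s / q) = q / r by field_simp,
      show q / r * (r * s / q) * (1 / s) = 1 by field_simp, Real.rpow_one, hs_inv]
  have hmixed : l ^ (q / p) * (r / (r - 1) * (l ^ (q / r)) ^ (1 - r)) = r / (r - 1) * l := by
    rw [← rpow_mul hl.le, mul_left_comm, ← rpow_add hl,
      show q / p + q / r * (1 - r) = 1 by field_simp at hpqr ⊢; linarith, Real.rpow_one]
  calc ∫⁻ x, ‖u x‖ₑ * ‖v x‖ₑ ∂μ
      ≤ (ENNReal.ofReal (s / (s - r) * (l ^ (q / r)) ^ (s - r)) * 1) ^ (1 / s) * 1 +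
          ENNReal.ofReal (l ^ (q / p)) *
            (ENNReal.ofReal (r / (r - 1) * (l ^ (q / r)) ^ (1 - r)) * 1) +
          ∫⁻ x, upperTrunc u (l ^ (q / r)) x * upperTrunc v (l ^ (q / p)) x ∂μ := by
        refine (lintegral_enorm_mul_enorm_le (γ := l ^ (q / p)) hsp hr (sub_pos.1 hsr) hu hv
          (rpow_pos_of_pos hl (q / r))).trans ?_
        gcongr <;> exact ENNReal.rpow_le_one hu_le hr₀.le
    _ = _ := by
        rw [mul_one, mul_one, mul_one,
          ENNReal.ofReal_rpow_of_nonneg (by positivity) (by positivity), hsmall,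
          ← ENNReal.ofReal_mul (by positivity), hmixed,
          ← ENNReal.ofReal_add (by positivity) (by positivity), ← add_mul, levelConst]

end LevelBound

lemma rpow_le_lintegral_rpow_mul_of_le_add {q K : ℝ} (hq : 1 < q) (hK : 0 < K) {T : ℝ≥0∞}
    {B : ℝ → ℝ≥0∞} (h : ∀ l : ℝ, 0 < l → T ≤ ENNReal.ofReal (K * l) + B l) :
    T ^ q ≤ ENNReal.ofReal (2 * (q - 1) * (2 * K) ^ (q - 1)) *
      ∫⁻ l in Set.Ioi (0 : ℝ), ENNReal.ofReal (l ^ (q - 2)) * B l := by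
  have hq₀ : 0 < q := by linarith
  have hq₁ : 0 < q - 1 := by linarith
  refine (ENNReal.le_rpow_inv_iff hq₀).1 (ENNReal.le_of_forall_nnreal_lt fun R hRT ↦ ?_)
  rw [ENNReal.le_rpow_inv_iff hq₀]
  have hB : ∀ l ∈ Set.Ioo (0 : ℝ) (R / (2 * K)), ENNReal.ofReal (R / 2) ≤ B l := by
    intro l hl
    have hKl : K * l ≤ R / 2 := by
      have := (lt_div_iff₀ (by positivity)).1 hl.2
      linarith
    refine (ENNReal.add_le_add_iff_left (ENNReal.ofReal_ne_top (r := R / 2))).1 ?_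
    calc ENNReal.ofReal (R / 2) + ENNReal.ofReal (R / 2)
        = R := by
          rw [← ENNReal.ofReal_add (by positivity) (by positivity), add_halves,
            ENNReal.ofReal_coe_nnreal]
      _ ≤ ENNReal.ofReal (K * l) + B l := hRT.le.trans (h l hl.1)
      _ ≤ ENNReal.ofReal (R / 2) + B l := by gcongr
  have hconst : (R : ℝ) ^ q =
      2 * (q - 1) * (2 * K) ^ (q - 1) * ((R / (2 * K)) ^ (q - 1) / (q - 1) * (R / 2)) := by
    have hRq : (R : ℝ) ^ q = R ^ (q - 1) * R := by
      rw [← rpow_add_one' R.coe_nonneg (by linarith), sub_add_cancel]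
    rw [hRq, div_rpow R.coe_nonneg (by positivity)]
    field_simp
  calc (R : ℝ≥0∞) ^ q
      = ENNReal.ofReal (2 * (q - 1) * (2 * K) ^ (q - 1)) *
          ∫⁻ l in Set.Ioo (0 : ℝ) (R / (2 * K)),
            ENNReal.ofReal (l ^ (q - 2)) * ENNReal.ofReal (R / 2) := by
        rw [lintegral_mul_const _ (by fun_prop),
          lintegral_Ioo_zero_rpow (by linarith) (by positivity), show q - 2 + 1 = q - 1 by ring,
          ← ENNReal.ofReal_mul (by positivity), ← ENNReal.ofReal_mul (by positivity), ← hconst,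
          ← ENNReal.ofReal_rpow_of_nonneg R.coe_nonneg hq₀.le, ENNReal.ofReal_coe_nnreal]
    _ ≤ ENNReal.ofReal (2 * (q - 1) * (2 * K) ^ (q - 1)) *
          ∫⁻ l in Set.Ioo (0 : ℝ) (R / (2 * K)), ENNReal.ofReal (l ^ (q - 2)) * B l := by
        gcongr _ * ?_
        exact setLIntegral_mono' measurableSet_Ioo fun l hl ↦ by gcongr; exact hB l hl
    _ ≤ _ := by
        gcongr _ * ?_
        exact lintegral_mono_set Set.Ioo_subset_Ioi_self

lemma eWeakLpNorm_const_mul_norm_le {α E : Type*} [MeasurableSpace α] [SeminormedAddCommGroup E]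
    (f : α → E) (r : ℝ) (μ : Measure α) {c : NNReal} (hc : 0 < c) :
    eWeakLpNorm (fun x ↦ c * ‖f x‖) r μ ≤ c * eWeakLpNorm f r μ := by
  refine iSup₂_le fun t ht ↦ ?_
  have hc' : (0 : ℝ) < c := hc
  have hlevel : {x | t < ‖c * ‖f x‖‖} = {x | t / c < ‖f x‖} := by
    simp only [norm_mul, norm_norm, norm_of_nonneg hc'.le, div_lt_iff₀' hc']
  calc ENNReal.ofReal t * μ {x | t < ‖c * ‖f x‖‖} ^ (1 / r)
      = c * (ENNReal.ofReal (t / c) * μ {x | t / c < ‖f x‖} ^ (1 / r)) := by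
        rw [hlevel, ← mul_assoc, ← ENNReal.ofReal_coe_nnreal, ← ENNReal.ofReal_mul hc'.le,
          mul_div_cancel₀ t hc'.ne']
    _ ≤ c * eWeakLpNorm f r μ := by
        gcongr
        exact le_iSup₂ (f := fun (t : ℝ) (_ : 0 < t) ↦
          ENNReal.ofReal t * μ {x | t < ‖f x‖} ^ (1 / r)) (t / c) (div_pos ht hc')

lemma rpow_mul_lintegral_upperTrunc_rpow_le {α E : Type*} [MeasurableSpace α]
    [SeminormedAddCommGroup E] {μ : Measure α} {f : α → E} {r : ℝ} (q : ℝ) (hr : 1 < r)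
    (hf : AEStronglyMeasurable f μ) (hf_le : eWeakLpNorm f r μ ≤ 1) {l : ℝ} (hl : 0 < l) :
    ENNReal.ofReal (l ^ (q - 2)) * ∫⁻ x, upperTrunc f (l ^ (q / r)) x ∂μ ≤
      ENNReal.ofReal (r / (r - 1)) * ENNReal.ofReal (l ^ (q / r - 1 - 1)) := by
  have hr₀ : 0 < r := by linarith
  have : 0 < r - 1 := by linarith
  have hpow : l ^ (q - 2) * (r / (r - 1) * (l ^ (q / r)) ^ (1 - r)) =
      r / (r - 1) * l ^ (q / r - 1 - 1) := by
    rw [mul_left_comm, ← rpow_mul hl.le, ← rpow_add hl]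
    congr 2
    field_simp
    ring
  rw [← ENNReal.ofReal_mul (by positivity), ← hpow, ENNReal.ofReal_mul (by positivity)]
  gcongr
  refine (lintegral_upperTrunc_le hr hf (by positivity)).trans ?_
  exact mul_le_of_le_one_right' (ENNReal.rpow_le_one hf_le hr₀.le)

lemma div_sub_one_pos {p q r : ℝ} (hp : 1 < p) (hq : 0 < q) (hr : 0 < r)
    (hpqr : 1 + 1 / q = 1 / r + 1 / p) : 0 < q / r - 1 := by
  have : 1 / p < 1 := (div_lt_one (by linarith)).2 hp
  exact sub_pos.2 ((one_lt_div hr).2 ((one_div_lt_one_div hq hr).1 (by linarith)))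

lemma lintegral_rpow_mul_lintegral_upperTrunc_mul_le {α β E F : Type*} [MeasurableSpace α]
    [MeasurableSpace β] [SeminormedAddCommGroup E] [SeminormedAddCommGroup F] {μ : Measure α}
    {ν : Measure β} [SFinite ν] {f : α → E} {g : β → F} {p q r : ℝ} (hp : 1 < p) (hq : 0 < q)
    (hr : 1 < r) (hpqr : 1 + 1 / q = 1 / r + 1 / p) (hf : AEStronglyMeasurable f μ)
    (hg : StronglyMeasurable g) (hf_le : eWeakLpNorm f r μ ≤ 1) (hg_le : eLpNorm' g p ν ≤ 1) :
    ∫⁻ l in Set.Ioi (0 : ℝ), ENNReal.ofReal (l ^ (q - 2)) *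
        ((∫⁻ x, upperTrunc f (l ^ (q / r)) x ∂μ) * ∫⁻ y, upperTrunc g (l ^ (q / p)) y ∂ν) ≤
      ENNReal.ofReal (r / (r - 1) / (q / r - 1)) := by
  have hp₀ : 0 < p := by linarith
  have hr₀ : 0 < r := by linarith
  have : 0 < r - 1 := by linarith
  have hqr := div_sub_one_pos hp hq hr₀ hpqr
  have hexp : (q / r - 1) / (q / p) + 1 = p := by
    field_simp at hpqr ⊢
    linarith
  have hg_rpow : ∫⁻ y, ‖g y‖ₑ ^ p ∂ν ≤ 1 := by
    rw [lintegral_rpow_enorm_eq_rpow_eLpNorm' hp₀]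
    exact ENNReal.rpow_le_one hg_le hp₀.le
  calc _ ≤ ∫⁻ l in Set.Ioi (0 : ℝ), ENNReal.ofReal (r / (r - 1)) *
          (ENNReal.ofReal (l ^ (q / r - 1 - 1)) * ∫⁻ y, upperTrunc g (l ^ (q / p)) y ∂ν) :=
        setLIntegral_mono' measurableSet_Ioi fun l hl ↦ by
          rw [← mul_assoc, ← mul_assoc]
          gcongr ?_ * _
          exact rpow_mul_lintegral_upperTrunc_rpow_le q hr hf hf_le hl
    _ = ENNReal.ofReal (r / (r - 1)) *
          (ENNReal.ofReal (q / r - 1)⁻¹ * ∫⁻ y, ‖g y‖ₑ ^ p ∂ν) := by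
        rw [lintegral_const_mul' _ _ ENNReal.ofReal_ne_top,
          lintegral_rpow_mul_lintegral_upperTrunc_rpow hqr (by positivity) hg, hexp]
    _ ≤ ENNReal.ofReal (r / (r - 1)) * (ENNReal.ofReal (q / r - 1)⁻¹ * 1) := by gcongr
    _ = ENNReal.ofReal (r / (r - 1) / (q / r - 1)) := by
        rw [mul_one, ← ENNReal.ofReal_mul (by positivity), div_eq_mul_inv (r / (r - 1))]

/-- The constant that the proof gives in the weak Young inequality: the factor
`2 * (q - 1) * (2 * levelConst p q r) ^ (q - 1)` is the loss in recovering the `q`-th power from the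
level bounds, and the last factor bounds the integral over all levels. -/
def weakYoungConst (p q r : ℝ) : ℝ :=
  (2 * (q - 1) * (2 * levelConst p q r) ^ (q - 1) * (r / (r - 1) / (q / r - 1))) ^ (1 / q)

lemma weakYoungConst_pos {p q r : ℝ} (hp : 1 < p) (hq : 1 < q) (hr : 1 < r)
    (hpqr : 1 + 1 / q = 1 / r + 1 / p) : 0 < weakYoungConst p q r := by
  have hq₀ : 0 < q := by linarith
  have : 0 < q - 1 := by linarith
  have : 0 < r - 1 := by linarith
  have := levelConst_pos (p := p) hq₀ hr
  have := div_sub_one_pos hp hq₀ (by linarith) hpqr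
  unfold weakYoungConst
  positivity

section Convolution

variable {G : Type*} [AddGroup G] [MeasurableSpace G] [MeasurableAdd₂ G] [MeasurableNeg G]
  {μ : Measure G} {E F : Type*} [SeminormedAddCommGroup E] [SeminormedAddCommGroup F] {f : G → E}
  {g : G → F} {p q r : ℝ}

lemma lintegral_sub_mul_le_of_le_one [μ.IsAddLeftInvariant] [μ.IsNegInvariant]
    (hp : 1 < p) (hq : 0 < q) (hr : 1 < r) (hpqr : 1 + 1 / q = 1 / r + 1 / p)
    (hf : AEStronglyMeasurable f μ) (hg : AEStronglyMeasurable g μ)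
    (hf_le : eWeakLpNorm f r μ ≤ 1) (hg_le : eLpNorm' g p μ ≤ 1) (x : G) {l : ℝ} (hl : 0 < l) :
    ∫⁻ y, ‖f (x - y)‖ₑ * ‖g y‖ₑ ∂μ ≤ ENNReal.ofReal (levelConst p q r * l) +
      ∫⁻ y, upperTrunc f (l ^ (q / r)) (x - y) * upperTrunc g (l ^ (q / p)) y ∂μ := by
  have hsub := Measure.measurePreserving_sub_left μ x
  refine lintegral_enorm_mul_enorm_le_of_le_one (u := fun y ↦ f (x - y)) hp hq hr hpqr
    (hf.comp_measurePreserving hsub) hg ?_ hg_le hl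
  rwa [eWeakLpNorm_comp_measurePreserving hf hsub]

lemma lintegral_sub_mul_congr_ae [μ.IsAddLeftInvariant] [μ.IsNegInvariant] {f' : G → E} {g' : G → F}
    (hf : f =ᵐ[μ] f') (hg : g =ᵐ[μ] g') (x : G) :
    ∫⁻ y, ‖f (x - y)‖ₑ * ‖g y‖ₑ ∂μ = ∫⁻ y, ‖f' (x - y)‖ₑ * ‖g' y‖ₑ ∂μ := by
  have hf_sub := (Measure.measurePreserving_sub_left μ x).quasiMeasurePreserving.ae_eq_comp hf
  refine lintegral_congr_ae ?_
  filter_upwards [hf_sub, hg] with y hfy hgy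
  simp only [Function.comp_apply] at hfy
  rw [hfy, hgy]

variable [SFinite μ]

lemma lintegral_lintegral_sub_mul [μ.IsAddRightInvariant] {u v : G → ℝ≥0∞} (hu : Measurable u)
    (hv : Measurable v) :
    ∫⁻ x, ∫⁻ y, u (x - y) * v y ∂μ ∂μ = (∫⁻ x, u x ∂μ) * ∫⁻ y, v y ∂μ := by
  rw [lintegral_lintegral_swap (by fun_prop), ← lintegral_const_mul _ hv]
  congr 1 with y
  rw [lintegral_mul_const _ (by fun_prop), lintegral_sub_right_eq_self u y]

lemma lintegral_lintegral_mul_lintegral_sub_mul [μ.IsAddRightInvariant] {T : Type*}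
    [MeasurableSpace T] {ν : Measure T} [SFinite ν] {w : T → ℝ≥0∞} {u v : T → G → ℝ≥0∞}
    (hw : Measurable w) (hu : Measurable u.uncurry) (hv : Measurable v.uncurry) :
    ∫⁻ x, (∫⁻ t, w t * ∫⁻ y, u t (x - y) * v t y ∂μ ∂ν) ∂μ =
      ∫⁻ t, w t * ((∫⁻ x, u t x ∂μ) * ∫⁻ y, v t y ∂μ) ∂ν := by
  have hmeas : Measurable fun z : G × T ↦ w z.2 * ∫⁻ y, u z.2 (z.1 - y) * v z.2 y ∂μ := by
    have : Measurable fun z : (G × T) × G ↦ u z.1.2 (z.1.1 - z.2) * v z.1.2 z.2 := by fun_prop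
    exact (hw.comp measurable_snd).mul this.lintegral_prod_right'
  rw [lintegral_lintegral_swap hmeas.aemeasurable]
  congr 1 with t
  have hmeas_sub : Measurable fun x ↦ ∫⁻ y, u t (x - y) * v t y ∂μ := by
    have : Measurable fun z : G × G ↦ u t (z.1 - z.2) * v t z.2 := by fun_prop
    exact this.lintegral_prod_right'
  rw [lintegral_const_mul _ hmeas_sub, lintegral_lintegral_sub_mul (by fun_prop) (by fun_prop)]

variable [μ.IsAddLeftInvariant] [μ.IsNegInvariant]

lemma eLpNorm'_lintegral_sub_mul_le_of_le_one (hp : 1 < p) (hq : 1 < q) (hr : 1 < r)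
    (hpqr : 1 + 1 / q = 1 / r + 1 / p) (hf : StronglyMeasurable f) (hg : StronglyMeasurable g)
    (hf_le : eWeakLpNorm f r μ ≤ 1) (hg_le : eLpNorm' g p μ ≤ 1) :
    eLpNorm' (fun x ↦ ∫⁻ y, ‖f (x - y)‖ₑ * ‖g y‖ₑ ∂μ) q μ ≤
      ENNReal.ofReal (weakYoungConst p q r) := by
  have : μ.IsAddRightInvariant := Measure.neg_eq_self μ ▸ inferInstance
  have hq₀ : 0 < q := by linarith
  have : 0 < r - 1 := by linarith
  have hqr := div_sub_one_pos hp hq₀ (by linarith) hpqr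
  have hu : Measurable (Function.uncurry fun l : ℝ ↦ upperTrunc f (l ^ (q / r))) :=
    measurable_upperTrunc_comp hf measurable_snd (measurable_fst.pow_const _)
  have hv : Measurable (Function.uncurry fun l : ℝ ↦ upperTrunc g (l ^ (q / p))) :=
    measurable_upperTrunc_comp hg measurable_snd (measurable_fst.pow_const _)
  have hK := levelConst_pos (p := p) hq₀ hr
  set A := 2 * (q - 1) * (2 * levelConst p q r) ^ (q - 1)
  have hA : 0 ≤ A := mul_nonneg (by linarith) (by positivity)
  calc eLpNorm' (fun x ↦ ∫⁻ y, ‖f (x - y)‖ₑ * ‖g y‖ₑ ∂μ) q μ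
      = (∫⁻ x, (∫⁻ y, ‖f (x - y)‖ₑ * ‖g y‖ₑ ∂μ) ^ q ∂μ) ^ (1 / q) := by
        simp only [eLpNorm', enorm_eq_self]
    _ ≤ (∫⁻ x, (ENNReal.ofReal A * ∫⁻ l in Set.Ioi (0 : ℝ), ENNReal.ofReal (l ^ (q - 2)) *
          ∫⁻ y, upperTrunc f (l ^ (q / r)) (x - y) * upperTrunc g (l ^ (q / p)) y ∂μ) ∂μ) ^
            (1 / q) := by
        gcongr with x
        exact rpow_le_lintegral_rpow_mul_of_le_add hq hK fun l ↦
          lintegral_sub_mul_le_of_le_one hp hq₀ hr hpqr hf.aestronglyMeasurable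
            hg.aestronglyMeasurable hf_le hg_le x
    _ = (ENNReal.ofReal A * ∫⁻ l in Set.Ioi (0 : ℝ), ENNReal.ofReal (l ^ (q - 2)) *
          ((∫⁻ x, upperTrunc f (l ^ (q / r)) x ∂μ) *
            ∫⁻ y, upperTrunc g (l ^ (q / p)) y ∂μ)) ^ (1 / q) := by
        rw [lintegral_const_mul' _ _ ENNReal.ofReal_ne_top,
          lintegral_lintegral_mul_lintegral_sub_mul (by fun_prop) hu hv]
    _ ≤ (ENNReal.ofReal A * ENNReal.ofReal (r / (r - 1) / (q / r - 1))) ^ (1 / q) := by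
        gcongr
        exact lintegral_rpow_mul_lintegral_upperTrunc_mul_le hp hq₀ hr hpqr
          hf.aestronglyMeasurable hg hf_le hg_le
    _ = ENNReal.ofReal (weakYoungConst p q r) := by
        rw [← ENNReal.ofReal_mul hA, ENNReal.ofReal_rpow_of_nonneg (by positivity)
          (by positivity), weakYoungConst]

lemma eLpNorm'_lintegral_sub_mul_le_of_le (hp : 1 < p) (hq : 1 < q) (hr : 1 < r)
    (hpqr : 1 + 1 / q = 1 / r + 1 / p) (hf : StronglyMeasurable f) (hg : StronglyMeasurable g)
    {A B : NNReal} (hA : 0 < A) (hB : 0 < B) (hf_le : eWeakLpNorm f r μ ≤ A)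
    (hg_le : eLpNorm' g p μ ≤ B) :
    eLpNorm' (fun x ↦ ∫⁻ y, ‖f (x - y)‖ₑ * ‖g y‖ₑ ∂μ) q μ ≤
      A * B * ENNReal.ofReal (weakYoungConst p q r) := by
  set u := fun x ↦ (A⁻¹ : NNReal) * ‖f x‖
  set v := fun x ↦ (B⁻¹ : NNReal) * ‖g x‖
  have hu_le : eWeakLpNorm u r μ ≤ 1 :=
    calc eWeakLpNorm u r μ ≤ ↑A⁻¹ * eWeakLpNorm f r μ :=
          eWeakLpNorm_const_mul_norm_le f r μ (inv_pos.2 hA)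
      _ ≤ ↑A⁻¹ * A := by gcongr
      _ = 1 := by rw [← ENNReal.coe_mul, inv_mul_cancel₀ hA.ne', ENNReal.coe_one]
  have hv_le : eLpNorm' v p μ ≤ 1 :=
    calc eLpNorm' v p μ ≤ ↑B⁻¹ * eLpNorm' g p μ :=
          eLpNorm'_le_nnreal_smul_eLpNorm'_of_ae_le_mul'
            (.of_forall fun x ↦ by simp only [v, enorm_mul, enorm_norm, NNReal.enorm_eq, le_refl])
            (by linarith)
      _ ≤ ↑B⁻¹ * B := by gcongr
      _ = 1 := by rw [← ENNReal.coe_mul, inv_mul_cancel₀ hB.ne', ENNReal.coe_one]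
  have hfg (x y : G) : ‖f (x - y)‖ₑ * ‖g y‖ₑ = ↑(A * B) * (‖u (x - y)‖ₑ * ‖v y‖ₑ) := by
    have hAB : A * B * (A⁻¹ * B⁻¹) = 1 := by field_simp
    simp only [u, v, enorm_mul, enorm_norm, NNReal.enorm_eq]
    rw [mul_mul_mul_comm, ← mul_assoc, ← ENNReal.coe_mul, ← ENNReal.coe_mul, hAB,
      ENNReal.coe_one, one_mul]
  calc _ ≤ (A * B) • eLpNorm' (fun x ↦ ∫⁻ y, ‖u (x - y)‖ₑ * ‖v y‖ₑ ∂μ) q μ := by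
        refine eLpNorm'_le_nnreal_smul_eLpNorm'_of_ae_le_mul' (.of_forall fun x ↦ ?_)
          (by linarith)
        simp only [hfg, lintegral_const_mul' _ _ ENNReal.coe_ne_top, enorm_eq_self, le_refl]
    _ ≤ _ := by
        rw [ENNReal.smul_def, smul_eq_mul, ENNReal.coe_mul]
        gcongr
        exact eLpNorm'_lintegral_sub_mul_le_of_le_one hp hq hr hpqr (hf.norm.const_mul _)
          (hg.norm.const_mul _) hu_le hv_le

lemma measurable_lintegral_sub_mul (hf : AEStronglyMeasurable f μ)
    (hg : AEStronglyMeasurable g μ) : Measurable fun x ↦ ∫⁻ y, ‖f (x - y)‖ₑ * ‖g y‖ₑ ∂μ := by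
  simp only [lintegral_sub_mul_congr_ae hf.ae_eq_mk hg.ae_eq_mk]
  have hf_mk := hf.stronglyMeasurable_mk.enorm
  have hg_mk := hg.stronglyMeasurable_mk.enorm
  have : Measurable fun z : G × G ↦ ‖hf.mk f (z.1 - z.2)‖ₑ * ‖hg.mk g z.2‖ₑ :=
    (hf_mk.comp measurable_sub).mul (hg_mk.comp measurable_snd)
  exact this.lintegral_prod_right'

/- Approximating the two norms from above also covers the case where one of them vanishes, where
the data cannot be normalised. -/
theorem eLpNorm'_lintegral_sub_mul_le (hp : 1 < p) (hq : 1 < q) (hr : 1 < r)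
    (hpqr : 1 + 1 / q = 1 / r + 1 / p) (hf : AEStronglyMeasurable f μ)
    (hg : AEStronglyMeasurable g μ) (hf_lt : eWeakLpNorm f r μ < ∞) (hg_lt : eLpNorm' g p μ < ∞) :
    eLpNorm' (fun x ↦ ∫⁻ y, ‖f (x - y)‖ₑ * ‖g y‖ₑ ∂μ) q μ ≤
      ENNReal.ofReal (weakYoungConst p q r) * eWeakLpNorm f r μ * eLpNorm' g p μ := by
  have hC := ENNReal.ofReal_pos.2 (weakYoungConst_pos hp hq hr hpqr)
  simp only [lintegral_sub_mul_congr_ae hf.ae_eq_mk hg.ae_eq_mk]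
  rw [mul_assoc, mul_comm, ← ENNReal.div_le_iff_le_mul (.inl hC.ne') (.inl ENNReal.ofReal_ne_top)]
  refine ENNReal.le_mul_of_forall_lt (.inr hg_lt.ne) (.inl hf_lt.ne) fun A hA B hB ↦ ?_
  rw [ENNReal.div_le_iff_le_mul (.inl hC.ne') (.inl ENNReal.ofReal_ne_top)]
  have hA₀ := pos_of_gt hA
  have hB₀ := pos_of_gt hB
  rcases eq_or_ne A ∞ with rfl | hA_top
  · simp [ENNReal.top_mul, hB₀.ne', hC.ne']
  rcases eq_or_ne B ∞ with rfl | hB_top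
  · simp [ENNReal.mul_top, hA₀.ne', hC.ne']
  lift A to NNReal using hA_top
  lift B to NNReal using hB_top
  refine eLpNorm'_lintegral_sub_mul_le_of_le hp hq hr hpqr hf.stronglyMeasurable_mk
    hg.stronglyMeasurable_mk (by simpa using hA₀) (by simpa using hB₀) ?_ ?_
  · exact (eWeakLpNorm_congr_ae hf.ae_eq_mk).symm.trans_le hA.le
  · exact (eLpNorm'_congr_ae hg.ae_eq_mk).symm.trans_le hB.le

end Convolution

theorem weak_young_inequality_general {G 𝕜 E F F' : Type*} [AddGroup G] [MeasurableSpace G]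
    [MeasurableAdd₂ G] [MeasurableNeg G] {μ : Measure G} [SFinite μ] [μ.IsAddLeftInvariant]
    [μ.IsNegInvariant] [NontriviallyNormedField 𝕜] [NormedAddCommGroup E] [NormedSpace 𝕜 E]
    [NormedAddCommGroup F] [NormedSpace 𝕜 F] [NormedAddCommGroup F'] [NormedSpace 𝕜 F']
    [NormedSpace ℝ F'] [CompleteSpace F'] (L : E →L[𝕜] F →L[𝕜] F') {p q r : ℝ} (hp : 1 < p)
    (hq : 1 < q) (hr : 1 < r) (hpqr : 1 + 1 / q = 1 / r + 1 / p) {f : G → E} {g : G → F}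
    (hf : AEStronglyMeasurable f μ) (hg : AEStronglyMeasurable g μ)
    (hf_lt : eWeakLpNorm f r μ < ∞) (hg_lt : eLpNorm' g p μ < ∞) :
    (∀ᵐ x ∂μ, Integrable (fun y ↦ L (f (x - y)) (g y)) μ) ∧
      eLpNorm' (fun x ↦ ∫ y, L (f (x - y)) (g y) ∂μ) q μ ≤
        ‖L‖ₑ * (ENNReal.ofReal (weakYoungConst p q r) * eWeakLpNorm f r μ * eLpNorm' g p μ) := by
  have hq₀ : 0 < q := by linarith
  have hle := eLpNorm'_lintegral_sub_mul_le hp hq hr hpqr hf hg hf_lt hg_lt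
  have hL (x : G) : ∫⁻ y, ‖L (f (x - y)) (g y)‖ₑ ∂μ ≤
      ‖L‖ₑ * ∫⁻ y, ‖f (x - y)‖ₑ * ‖g y‖ₑ ∂μ := by
    rw [← lintegral_const_mul' _ _ enorm_ne_top]
    gcongr with y
    rw [← mul_assoc]
    exact L.le_opENorm₂ _ _
  constructor
  · have hfin := lintegral_rpow_enorm_lt_top_of_eLpNorm'_lt_top hq₀ (hle.trans_lt
      (ENNReal.mul_lt_top (ENNReal.mul_lt_top ENNReal.ofReal_lt_top hf_lt) hg_lt))
    simp only [enorm_eq_self] at hfin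
    filter_upwards [ae_lt_top ((measurable_lintegral_sub_mul hf hg).pow_const q) hfin.ne] with x hx
    have hf_sub := hf.comp_measurePreserving (Measure.measurePreserving_sub_left μ x)
    refine ⟨L.aestronglyMeasurable_comp₂ hf_sub hg, (hL x).trans_lt ?_⟩
    exact ENNReal.mul_lt_top enorm_lt_top ((ENNReal.rpow_lt_top_iff_of_pos hq₀).1 hx)
  · calc _ ≤ ‖L‖₊ • eLpNorm' (fun x ↦ ∫⁻ y, ‖f (x - y)‖ₑ * ‖g y‖ₑ ∂μ) q μ :=
          eLpNorm'_le_nnreal_smul_eLpNorm'_of_ae_le_mul' (.of_forall fun x ↦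
            (enorm_integral_le_lintegral_enorm _).trans (hL x)) hq₀
      _ ≤ _ := by
          rw [ENNReal.smul_def, smul_eq_mul]
          exact mul_le_mul_right hle _

lemma weakLnorm_eq_eWeakLpNorm {d : ℕ} (f : (Fin d → ℝ) → ℝ) (r : ℝ) :
    weakLnorm f r = eWeakLpNorm f r volume := rfl

lemma Lnorm_eq_eLpNorm' {d : ℕ} (g : (Fin d → ℝ) → ℝ) {s : ℝ} (hs : 0 ≤ s) :
    Lnorm g s = eLpNorm' g s volume := by
  simp only [Lnorm, eLpNorm', Real.enorm_eq_ofReal_abs,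
    ENNReal.ofReal_rpow_of_nonneg (abs_nonneg _) hs]

/-- Weak Young inequality: for 1 < p, q, r < ∞ with 1 + 1/q = 1/r + 1/p there is a
constant C = C(p,q,r,d) such that for f ∈ L^{r,∞}(ℝ^d) and g ∈ L^p(ℝ^d) the convolution
f⋆g is a.e. defined and ‖f⋆g‖_{L^q} ≤ C ‖f‖_{L^{r,∞}} ‖g‖_{L^p}. -/
theorem weak_young_inequality (d : ℕ) (hd : 1 ≤ d) (p q r : ℝ)
    (hp1 : 1 < p) (hq1 : 1 < q) (hr1 : 1 < r) (hpqr : 1 + 1 / q = 1 / r + 1 / p) :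
    ∃ C : ℝ, 0 < C ∧
      ∀ f g : (Fin d → ℝ) → ℝ, Measurable f → Measurable g →
        weakLnorm f r < ⊤ → Lnorm g p < ⊤ →
        (∀ᵐ x : Fin d → ℝ, Integrable (fun y => f (x - y) * g y)) ∧
          Lnorm (fun x => ∫ y : Fin d → ℝ, f (x - y) * g y) q
            ≤ ENNReal.ofReal C * weakLnorm f r * Lnorm g p := by
  refine ⟨weakYoungConst p q r, weakYoungConst_pos hp1 hq1 hr1 hpqr, fun f g hf hg hfr hgp ↦ ?_⟩
  have hmul : ‖ContinuousLinearMap.mul ℝ ℝ‖ₑ = 1 := by simp [enorm_eq_nnnorm]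
  rw [weakLnorm_eq_eWeakLpNorm] at hfr ⊢
  rw [Lnorm_eq_eLpNorm' g (by linarith)] at hgp ⊢
  rw [Lnorm_eq_eLpNorm' _ (by linarith)]
  simpa only [ContinuousLinearMap.mul_apply', hmul, one_mul] using
    weak_young_inequality_general (ContinuousLinearMap.mul ℝ ℝ) hp1 hq1 hr1 hpqr
      hf.aestronglyMeasurable hg.aestronglyMeasurable hfr hgp
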